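/- Let p be an odd prime, and let R₂ = ℤ[x, x⁻¹, (1−x)⁻¹] be the localization of the polynomial ring ℤ[x] at the multiplicative set generated by x and 1−x. Let P'_{1,1} = R₂/(pR₂ + (1+x)R₂), and let P'_{3,1} be the R₂-module with underlying abelian group ℤ/p³ℤ × ℤ/p²ℤ × ℤ/pℤ on which x acts by x·(a₀,a₁,a₂) = (p·a₁ − a₀, p·a₂ − a₁, −a₂) (where p·a₁ and p·a₂ denote the images of a₁ and a₂ under the additive homomorphisms ℤ/p²ℤ → ℤ/p³ℤ and ℤ/pℤ → ℤ/p²ℤ induced by multiplication by p on ℤ; since p is odd, x and 1−x act invertibly, so this ℤ[x]-action extends uniquely to an R₂-module structure). If Q is a cocyclic R₂-module with socle isomorphic to P'_{1,1} and |Q| = p⁶, then Q can be generated by at most three elements, and if Q cannot be generated by two elements then Q is isomorphic to P'_{3,1}. -/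

import Mathlib

open Polynomial

/-- The ring `R₂ = ℤ[x, x⁻¹, (1−x)⁻¹]`: the localization of `ℤ[x]` at the multiplicative
set generated by `x` and `1 − x`. -/
abbrev R₂ : Type :=
  Localization (Submonoid.closure {Polynomial.X, 1 - Polynomial.X} : Submonoid (Polynomial ℤ))

/-- The image of `x` in `R₂`. -/
noncomputable def xR : R₂ := algebraMap (Polynomial ℤ) R₂ Polynomial.X

/-!
Let `y = 1 + x`, let `I = (p, y)`, so that `R₂ ⧸ I` has order `p`, and let `E` be the character
module `Hom(R₂, ℚ/ℤ)`. The monomials of degree `n` in `p` and `y` embed `M[Iⁿ⁺¹] / M[Iⁿ]` into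
`M[I]ⁿ⁺¹`; as `|E[I]| ≤ p`, this gives `|E[I³]| ≤ p¹⁺²⁺³ = p⁶`. A character that does not vanish on
the socle embeds a cocyclic module into `E`, so every cocyclic module of order `p⁶` killed by `I³`
is isomorphic to `E[I³]`, and `P'₃,₁` is such a module.

It remains to show that `I³` kills `Q` when `Q` is not generated by two elements. Every `z ∈ I` is
nilpotent on `Q`, so by Nakayama's lemma `|Q[z]| = |Q ⧸ zQ| > p²`. Taking `z = p`, `y`, `p + y`, one
finds elements of `Q[z]` on which the quadratic monomials in `p` and `y` do not vanish; their images
span `Q[I]³`, hence `|Q[I³]| = p⁶ = |Q|`.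
-/

section Cardinality

variable {R M N : Type*} [Ring R] [AddCommGroup M] [Module R M] [AddCommGroup N] [Module R N]

theorem card_ker_mul_card_range (f : M →ₗ[R] N) :
    Nat.card (LinearMap.ker f) * Nat.card (LinearMap.range f) = Nat.card M := by
  rw [Submodule.card_eq_card_quotient_mul_card (LinearMap.ker f),
    Nat.card_congr f.quotKerEquivRange.toEquiv]

theorem card_comap_eq (f : M →ₗ[R] N) (U : Submodule R N) :
    Nat.card (U.comap f) =
      Nat.card (LinearMap.ker f) * Nat.card (LinearMap.range f ⊓ U : Submodule R N) := by
  have hker : LinearMap.ker (f.domRestrict (U.comap f)) =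
      (LinearMap.ker f).comap (U.comap f).subtype := LinearMap.ker_comp _ _
  rw [← card_ker_mul_card_range (f.domRestrict (U.comap f)), LinearMap.range_domRestrict,
    Submodule.map_comap_eq, hker,
    Nat.card_congr (Submodule.comapSubtypeEquivOfLe (LinearMap.ker_le_comap (f := f))).toEquiv]

theorem submodule_eq_of_le_of_card_le {A B : Submodule R M} [Finite B] (hle : A ≤ B)
    (hcard : Nat.card B ≤ Nat.card A) : A = B :=
  Submodule.toAddSubgroup_injective <|
    AddSubgroup.eq_of_le_of_card_ge (H := A.toAddSubgroup) (K := B.toAddSubgroup) hle hcard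

theorem card_submodule_pi_const (ι : Type*) [Fintype ι] (U : Submodule R M) :
    Nat.card (Submodule.pi Set.univ fun _ : ι => U) = Nat.card U ^ Fintype.card ι := by
  have e : (Submodule.pi Set.univ fun _ : ι => U) ≃ (ι → U) :=
    (Equiv.subtypeEquivRight fun f => by simp [Submodule.mem_pi]).trans
      (Equiv.subtypePiEquivPi (p := fun _ : ι => (· ∈ U)))
  rw [Nat.card_congr e, Nat.card_fun, Nat.card_eq_fintype_card (α := ι)]

theorem finite_submodule_pi_const (ι : Type*) [Finite ι] (U : Submodule R M) [Finite U] :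
    Finite (Submodule.pi Set.univ fun _ : ι => U) := by
  have := Fintype.ofFinite ι
  exact Nat.finite_of_card_ne_zero (by rw [card_submodule_pi_const]; simp [Nat.card_pos.ne'])

theorem card_ker_pow_le [Finite M] (f : Module.End R M) (n : ℕ) :
    Nat.card (LinearMap.ker (f ^ n)) ≤ Nat.card (LinearMap.ker f) ^ n := by
  induction n with
  | zero => simp [Module.End.one_eq_id]
  | succ n ih =>
    rw [pow_succ f, Module.End.mul_eq_comp, LinearMap.ker_comp, card_comap_eq, pow_succ']
    exact Nat.mul_le_mul_left _ ((Nat.card_mono (Set.toFinite _) inf_le_right).trans ih)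

end Cardinality

section Generators

variable {R M : Type*} [Ring R] [AddCommGroup M] [Module R M] {p k n : ℕ}

theorem mul_card_le_card_of_lt (hp : p.Prime) (hM : Nat.card M = p ^ k) {A B : Submodule R M}
    (hlt : A < B) : p * Nat.card A ≤ Nat.card B := by
  have : Finite M := Nat.finite_of_card_ne_zero (hM ▸ pow_ne_zero _ hp.ne_zero)
  have card_eq (T : Submodule R M) : ∃ i, Nat.card T = p ^ i := by
    obtain ⟨i, -, hi⟩ := (Nat.dvd_prime_pow hp).1
      (hM ▸ AddSubgroup.card_addSubgroup_dvd_card T.toAddSubgroup)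
    exact ⟨i, hi⟩
  obtain ⟨i, hi⟩ := card_eq A
  obtain ⟨j, hj⟩ := card_eq B
  have hcard : Nat.card A < Nat.card B := (Set.toFinite (B : Set M)).card_lt_card hlt
  rw [hi, hj] at hcard ⊢
  rw [← pow_succ']
  exact Nat.pow_le_pow_right hp.pos ((Nat.pow_lt_pow_iff_right hp.one_lt).1 hcard)

theorem exists_finset_sup_span_eq_top (hp : p.Prime) (hM : Nat.card M = p ^ k) :
    ∀ (n : ℕ) (A : Submodule R M), p ^ k ≤ p ^ n * Nat.card A →
      ∃ G : Finset M, G.card ≤ n ∧ A ⊔ Submodule.span R (G : Set M) = ⊤ := by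
  classical
  have : Finite M := Nat.finite_of_card_ne_zero (hM ▸ pow_ne_zero _ hp.ne_zero)
  intro n
  induction n with
  | zero =>
    intro A hA
    refine ⟨∅, le_rfl, ?_⟩
    have hcard : Nat.card (⊤ : Submodule R M) ≤ Nat.card A := by
      simpa [hM] using hA
    simpa using submodule_eq_of_le_of_card_le le_top hcard
  | succ n ih =>
    intro A hA
    rcases eq_or_ne A ⊤ with rfl | hne
    · exact ⟨∅, by simp⟩
    obtain ⟨q, -, hq⟩ := SetLike.exists_of_lt hne.lt_top
    have hlt : A < A ⊔ Submodule.span R {q} := by simpa using hq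
    obtain ⟨G, hG, htop⟩ := ih (A ⊔ Submodule.span R {q}) <| by
      calc p ^ k ≤ p ^ n * (p * Nat.card A) := by rwa [← mul_assoc, ← pow_succ]
        _ ≤ _ := Nat.mul_le_mul_left _ (mul_card_le_card_of_lt hp hM hlt)
    refine ⟨insert q G, (Finset.card_insert_le _ _).trans (by lia), ?_⟩
    rw [Finset.coe_insert, Submodule.span_insert, ← sup_assoc, htop]

theorem eq_top_of_range_sup_eq_top {f : Module.End R M} (hf : IsNilpotent f) {T : Submodule R M}
    (hT : T ∈ Module.End.invtSubmodule f) (hsup : LinearMap.range f ⊔ T = ⊤) : T = ⊤ := by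
  obtain ⟨m, hm⟩ := hf
  have range_pow_sup (j : ℕ) : LinearMap.range (f ^ j) ⊔ T = ⊤ := by
    induction j with
    | zero => simp [Module.End.one_eq_id]
    | succ j ih =>
      have hTj : T.map (f ^ j) ≤ T :=
        Submodule.map_le_iff_le_comap.2 (Module.End.pow_apply_mem_of_forall_mem j hT)
      rw [eq_top_iff, ← ih]
      refine sup_le ?_ le_sup_right
      rw [LinearMap.range_eq_map, ← hsup, Submodule.map_sup, ← LinearMap.range_comp,
        ← Module.End.mul_eq_comp, ← pow_succ]
      exact sup_le_sup_left hTj _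
  simpa [hm] using range_pow_sup m

theorem exists_finset_span_eq_top_of_card_ker_le {R : Type*} [CommRing R] [Module R M]
    (hp : p.Prime) (hM : Nat.card M = p ^ k) {z : R} (hz : IsNilpotent (LinearMap.lsmul R M z))
    (hker : Nat.card (LinearMap.ker (LinearMap.lsmul R M z)) ≤ p ^ n) :
    ∃ G : Finset M, G.card ≤ n ∧ Submodule.span R (G : Set M) = ⊤ := by
  obtain ⟨G, hG, hsup⟩ := exists_finset_sup_span_eq_top hp hM n
    (LinearMap.range (LinearMap.lsmul R M z)) <| by
      rw [← hM, ← card_ker_mul_card_range (LinearMap.lsmul R M z)]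
      exact Nat.mul_le_mul_right _ hker
  exact ⟨G, hG, eq_top_of_range_sup_eq_top hz (fun _ ht => Submodule.smul_mem _ z ht) hsup⟩

end Generators

section PowTorsion

variable {R : Type*} [CommRing R] {I : Ideal R} {x y : R}
  {M : Type*} [AddCommGroup M] [Module R M]

/-- The submodule `M[Iⁿ]` of elements of `M` annihilated by the power `Iⁿ`; these are the steps of
the socle filtration of `M` when `I` is maximal and `M` is `I`-power torsion. -/
def powTorsion (I : Ideal R) (M : Type*) [AddCommGroup M] [Module R M] (n : ℕ) : Submodule R M :=
  Submodule.torsionBySet R M (I ^ n : Ideal R)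

theorem mem_powTorsion {n : ℕ} {q : M} : q ∈ powTorsion I M n ↔ ∀ r ∈ I ^ n, r • q = 0 := by
  simp [powTorsion, Submodule.mem_torsionBySet_iff]

theorem powTorsion_zero : powTorsion I M 0 = ⊥ := by
  simp [powTorsion, Submodule.torsionBySet_univ]

theorem mem_powTorsion_succ (hI : I = Ideal.span {x, y}) {n : ℕ} {q : M} :
    q ∈ powTorsion I M (n + 1) ↔ x • q ∈ powTorsion I M n ∧ y • q ∈ powTorsion I M n := by
  have hx : x ∈ I := hI ▸ Ideal.mem_span_pair.2 ⟨1, 0, by ring⟩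
  have hy : y ∈ I := hI ▸ Ideal.mem_span_pair.2 ⟨0, 1, by ring⟩
  simp only [mem_powTorsion, ← mul_smul]
  refine ⟨fun h => ⟨fun r hr => h _ (Ideal.mul_mem_mul hr hx),
    fun r hr => h _ (Ideal.mul_mem_mul hr hy)⟩, fun ⟨hqx, hqy⟩ r hr => ?_⟩
  rw [pow_succ] at hr
  induction hr using Submodule.mul_induction_on' with
  | mem_mul_mem r hr t ht =>
    obtain ⟨u, v, rfl⟩ := Ideal.mem_span_pair.1 (hI ▸ ht)
    have : r * (u * x + v * y) = u * (r * x) + v * (r * y) := by ring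
    rw [this, add_smul, mul_smul u, mul_smul v, hqx r hr, hqy r hr]
    simp
  | add r _ t _ hr ht => rw [add_smul, hr, ht, add_zero]

theorem mem_powTorsion_one (hI : I = Ideal.span {x, y}) {q : M} :
    q ∈ powTorsion I M 1 ↔ x • q = 0 ∧ y • q = 0 := by
  simp [mem_powTorsion_succ hI (n := 0), powTorsion_zero]

/-- Multiplication by the `n + 1` monomials of degree `n` in `x` and `y`, the `i`-th of them being
`xⁱ yⁿ⁻ⁱ`. It embeds `M[(x, y)ⁿ⁺¹] / M[(x, y)ⁿ]` into `M[(x, y)]ⁿ⁺¹`. -/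
def monomialSMul (x y : R) (M : Type*) [AddCommGroup M] [Module R M] (n : ℕ) :
    M →ₗ[R] Fin (n + 1) → M :=
  LinearMap.pi fun i => LinearMap.lsmul R M (x ^ (i : ℕ) * y ^ (n - i))

theorem monomialSMul_apply (n : ℕ) (q : M) (i : Fin (n + 1)) :
    monomialSMul x y M n q i = (x ^ (i : ℕ) * y ^ (n - i)) • q := rfl

theorem monomialSMul_smul_left (n : ℕ) (q : M) (i : Fin (n + 1)) :
    monomialSMul x y M n (x • q) i = monomialSMul x y M (n + 1) q i.succ := by
  simp only [monomialSMul_apply, Fin.val_succ, Nat.add_sub_add_right, ← mul_smul]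
  ring_nf

theorem monomialSMul_smul_right (n : ℕ) (q : M) (i : Fin (n + 1)) :
    monomialSMul x y M n (y • q) i = monomialSMul x y M (n + 1) q i.castSucc := by
  simp only [monomialSMul_apply, Fin.val_castSucc, ← mul_smul, mul_assoc, ← pow_succ]
  rw [Nat.sub_add_comm (Nat.le_of_lt_succ i.isLt)]

theorem ker_monomialSMul (hI : I = Ideal.span {x, y}) (n : ℕ) :
    LinearMap.ker (monomialSMul x y M n) = powTorsion I M n := by
  induction n with
  | zero =>
    ext q
    simp [powTorsion_zero, funext_iff, monomialSMul_apply]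
  | succ n ih =>
    ext q
    rw [mem_powTorsion_succ hI, ← ih]
    simp only [LinearMap.mem_ker, funext_iff, monomialSMul_smul_left, monomialSMul_smul_right,
      Pi.zero_apply]
    refine ⟨fun h => ⟨fun i => h _, fun i => h _⟩, fun ⟨hx, hy⟩ i => ?_⟩
    induction i using Fin.cases with
    | zero => exact hy 0
    | succ i => exact hx i

theorem comap_monomialSMul (hI : I = Ideal.span {x, y}) (n : ℕ) :
    (Submodule.pi Set.univ fun _ => powTorsion I M 1).comap (monomialSMul x y M n) =
      powTorsion I M (n + 1) := by
  ext q
  rw [mem_powTorsion_succ hI, ← ker_monomialSMul hI n]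
  simp only [Submodule.mem_comap, Submodule.mem_pi, Set.mem_univ, forall_const,
    mem_powTorsion_one hI, LinearMap.mem_ker, map_smul, funext_iff, Pi.smul_apply, Pi.zero_apply,
    forall_and]

theorem card_powTorsion_succ (hI : I = Ideal.span {x, y}) (n : ℕ) :
    Nat.card (powTorsion I M (n + 1)) = Nat.card (powTorsion I M n) *
      Nat.card (LinearMap.range (monomialSMul x y M n) ⊓
        Submodule.pi Set.univ fun _ => powTorsion I M 1 : Submodule R (Fin (n + 1) → M)) := by
  rw [← comap_monomialSMul hI, card_comap_eq, ker_monomialSMul hI]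

theorem finite_powTorsion [Finite (powTorsion I M 1)] (hI : I = Ideal.span {x, y}) (n : ℕ) :
    Finite (powTorsion I M n) := by
  induction n with
  | zero => rw [powTorsion_zero]; infer_instance
  | succ n ih =>
    refine Nat.finite_of_card_ne_zero ?_
    rw [card_powTorsion_succ hI]
    have := finite_submodule_pi_const (Fin (n + 1)) (powTorsion I M 1)
    have := Finite.Set.subset (Submodule.pi Set.univ fun _ : Fin (n + 1) => powTorsion I M 1 :
      Set (Fin (n + 1) → M)) (inf_le_right (a := LinearMap.range (monomialSMul x y M n)))
    exact mul_ne_zero Nat.card_pos.ne' Nat.card_pos.ne'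

theorem card_powTorsion_le [Finite (powTorsion I M 1)] (hI : I = Ideal.span {x, y}) (n : ℕ) :
    Nat.card (powTorsion I M n) ≤ Nat.card (powTorsion I M 1) ^ (n + 1).choose 2 := by
  induction n with
  | zero => simp [powTorsion_zero]
  | succ n ih =>
    rw [card_powTorsion_succ hI, Nat.choose_succ_succ', Nat.choose_one_right,
      Nat.add_comm (n + 1), pow_add]
    have := finite_submodule_pi_const (Fin (n + 1)) (powTorsion I M 1)
    refine Nat.mul_le_mul ih ((Nat.card_mono (Set.toFinite _) inf_le_right).trans ?_)
    exact (card_submodule_pi_const (Fin (n + 1)) _).trans_le (by simp)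

/-- The bound `card_powTorsion_le` is attained as soon as the last monomial map is onto, since
`xⁱ yⁿ⁻ⁱ • (x • q) = xⁱ⁺¹ yⁿ⁻ⁱ • q` makes all the previous ones onto as well. -/
theorem card_powTorsion_eq (hI : I = Ideal.span {x, y}) (n : ℕ)
    (hrange : (Submodule.pi Set.univ fun _ => powTorsion I M 1) ≤
      LinearMap.range (monomialSMul x y M n)) :
    Nat.card (powTorsion I M (n + 1)) = Nat.card (powTorsion I M 1) ^ (n + 2).choose 2 := by
  induction n with
  | zero => simp
  | succ n ih =>
    have hprev : (Submodule.pi Set.univ fun _ => powTorsion I M 1) ≤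
        LinearMap.range (monomialSMul x y M n) := by
      intro v hv
      obtain ⟨q, hq⟩ := hrange (x := Fin.cons 0 v) <| by
        intro i _
        induction i using Fin.cases with
        | zero => exact Submodule.zero_mem _
        | succ i => exact hv i (Set.mem_univ _)
      exact ⟨x • q, funext fun i => by rw [monomialSMul_smul_left, hq, Fin.cons_succ]⟩
    rw [card_powTorsion_succ hI, ih hprev, inf_eq_right.2 hrange,
      card_submodule_pi_const (Fin (n + 1 + 1)), Fintype.card_fin, ← pow_add,
      Nat.choose_succ_succ' (n + 2), Nat.choose_one_right, add_comm]

theorem powTorsion_eq_top_iff {n : ℕ} :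
    powTorsion I M n = ⊤ ↔ ∀ r ∈ I ^ n, ∀ q : M, r • q = 0 := by
  simp only [Submodule.eq_top_iff', mem_powTorsion]
  exact ⟨fun h r hr q => h q r hr, fun h q r hr => h r hr q⟩

end PowTorsion

section Cocyclic

variable {R M : Type*} [CommRing R] [AddCommGroup M] [Module R M] {S : Submodule R M}
  {I : Ideal R} {x y z w : R} {p n : ℕ}

theorem isNilpotent_of_le_ker {R : Type*} [Ring R] [Module R M] [IsNoetherian R M]
    {S : Submodule R M} (hS : IsLeast {T : Submodule R M | T ≠ ⊥} S) {f : Module.End R M}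
    (hf : S ≤ LinearMap.ker f) : IsNilpotent f := by
  obtain ⟨n, hdisj, hn⟩ := (f.eventually_disjoint_ker_pow_range_pow.and
    (Filter.eventually_ge_atTop 1)).exists
  have hker : S ≤ LinearMap.ker (f ^ n) := by
    obtain ⟨m, rfl⟩ := Nat.exists_eq_add_of_le' hn
    exact hf.trans (by rw [pow_succ]; exact LinearMap.ker_le_ker_comp f (f ^ m))
  refine ⟨n, by_contra fun hne => hS.1 (le_bot_iff.1 (hdisj hker (hS.2 ?_)))⟩
  simpa [LinearMap.range_eq_bot] using hne

theorem eq_powTorsion_one_of_isLeast [I.IsMaximal] (hS : IsLeast {T : Submodule R M | T ≠ ⊥} S)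
    (hle : S ≤ powTorsion I M 1) : S = powTorsion I M 1 := by
  refine le_antisymm hle fun q hq => ?_
  rcases eq_or_ne q 0 with rfl | hq0
  · exact S.zero_mem
  obtain ⟨t, htS, ht0⟩ := S.exists_mem_ne_zero_of_ne_bot hS.1
  obtain ⟨r, rfl⟩ := Submodule.mem_span_singleton.1
    (hS.2 (by simpa using hq0 : Submodule.span R {q} ≠ ⊥) htS)
  rw [mem_powTorsion, pow_one] at hq
  obtain ⟨u, i, hi, hur⟩ := Ideal.IsMaximal.exists_inv ‹I.IsMaximal› fun hr => ht0 (hq r hr)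
  have hq_eq : u • r • q = q := by simpa [add_smul, hq i hi, mul_smul] using congrArg (· • q) hur
  exact hq_eq ▸ S.smul_mem u htS

theorem exists_smul_eq_zero_and_pow_smul_eq [Finite M]
    (hS : IsLeast {T : Submodule R M | T ≠ ⊥} S) (hI : I = Ideal.span {z, w})
    (hcard : Nat.card (powTorsion I M 1) ^ n < Nat.card (LinearMap.ker (LinearMap.lsmul R M z)))
    {s : M} (hs : s ∈ S) : ∃ a : M, z • a = 0 ∧ w ^ n • a = s := by
  set K := LinearMap.ker (LinearMap.lsmul R M z)
  have hker : Nat.card (LinearMap.ker (LinearMap.lsmul R K w)) ≤ Nat.card (powTorsion I M 1) :=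
    Nat.card_le_card_of_injective
      (fun a => ⟨a, (mem_powTorsion_one hI).2 ⟨a.1.2, congrArg Subtype.val a.2⟩⟩)
      fun a b hab => Subtype.ext (Subtype.ext (Subtype.mk.inj hab))
  have hne : LinearMap.lsmul R K w ^ n ≠ 0 := fun h0 => hcard.not_ge <| by
    calc Nat.card K = Nat.card (LinearMap.ker (LinearMap.lsmul R K w ^ n)) := by simp [h0]
      _ ≤ _ := card_ker_pow_le _ n
      _ ≤ _ := Nat.pow_le_pow_left hker n
  obtain ⟨⟨a, ha⟩, hane⟩ := DFunLike.ne_iff.1 hne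
  have hwa : w ^ n • a ≠ 0 := fun h => hane <| by
    rw [Module.End.pow_apply]
    exact (smul_iterate_apply w n _).trans (Subtype.ext h)
  obtain ⟨u, rfl⟩ := Submodule.mem_span_singleton.1
    (hS.2 (by simpa using hwa : Submodule.span R {w ^ n • a} ≠ ⊥) hs)
  exact ⟨u • a, by rw [smul_comm, show z • a = 0 from ha, smul_zero], smul_comm _ _ _⟩

theorem pow_lt_card_ker_lsmul (hp : p.Prime) {k : ℕ} (hM : Nat.card M = p ^ k)
    (hS : IsLeast {T : Submodule R M | T ≠ ⊥} S) (hSI : S ≤ powTorsion I M 1)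
    (hgen : ¬∃ G : Finset M, G.card ≤ n ∧ Submodule.span R (G : Set M) = ⊤) (hz : z ∈ I) :
    p ^ n < Nat.card (LinearMap.ker (LinearMap.lsmul R M z)) := by
  have : Finite M := Nat.finite_of_card_ne_zero (hM ▸ pow_ne_zero _ hp.ne_zero)
  have hnil : IsNilpotent (LinearMap.lsmul R M z) := isNilpotent_of_le_ker hS fun s hs =>
    mem_powTorsion.1 (hSI hs) z (by rwa [pow_one])
  exact not_le.1 fun hle => hgen (exists_finset_span_eq_top_of_card_ker_le hp hM hnil hle)

/-- The elements `a`, `b`, `c` killed by `y`, `x` and `x + y` respectively hit the vectors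
`(0, 0, x²a)`, `(y²b, 0, 0)` and `(x²c, -x²c, x²c)`, which span `M[I]³`. -/
theorem pi_powTorsion_one_le_range_monomialSMul_two [Finite M] (hI : I = Ideal.span {x, y})
    (hS : IsLeast {T : Submodule R M | T ≠ ⊥} S) (hSI : S = powTorsion I M 1)
    (hker : ∀ z ∈ I, Nat.card S ^ 2 < Nat.card (LinearMap.ker (LinearMap.lsmul R M z))) :
    (Submodule.pi Set.univ fun _ => powTorsion I M 1) ≤
      LinearMap.range (monomialSMul x y M 2) := by
  rw [← hSI]
  intro v hv
  have hvS (i) : v i ∈ S := hv i (Set.mem_univ i)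
  have exists_of_span {z w : R} (hzw : I = Ideal.span {z, w}) {s : M} (hs : s ∈ S) :
      ∃ a : M, z • a = 0 ∧ w ^ 2 • a = s :=
    exists_smul_eq_zero_and_pow_smul_eq hS hzw
      (hSI ▸ hker z (hzw ▸ Ideal.subset_span (Set.mem_insert _ _))) hs
  have hI_swap : I = Ideal.span {y, x} := hI.trans (congrArg _ (Set.pair_comm x y))
  have hI_add : I = Ideal.span {x + y, x} := by
    rw [hI_swap, add_comm]
    simp
  obtain ⟨a, hya, hxxa⟩ := exists_of_span hI_swap (S.add_mem (hvS 2) (hvS 1))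
  obtain ⟨b, hxb, hyyb⟩ := exists_of_span hI (S.add_mem (hvS 0) (hvS 1))
  obtain ⟨c, hxyc, hxxc⟩ := exists_of_span hI_add (hvS 1)
  have hyc : y • c = -(x • c) := by rwa [add_smul, add_comm, add_eq_zero_iff_eq_neg] at hxyc
  rw [pow_two, mul_smul] at hxxa hyyb hxxc
  have hyyc : y • y • c = v 1 := by rw [hyc, smul_neg, smul_comm, hyc, smul_neg, neg_neg, hxxc]
  refine ⟨a + b - c, funext fun i => ?_⟩
  fin_cases i
  · simp [monomialSMul_apply, pow_two, mul_smul, smul_sub, hya, hyyb, hyyc]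
  · simp [monomialSMul_apply, mul_smul, smul_sub, hya, smul_comm x y b, hxb, hyc, hxxc]
  · simp [monomialSMul_apply, pow_two, mul_smul, smul_sub, hxb, hxxa, hxxc]

theorem powTorsion_three_eq_top (hp : p.Prime) (hI : I = Ideal.span {x, y})
    (hS : IsLeast {T : Submodule R M | T ≠ ⊥} S) (hSI : S = powTorsion I M 1)
    (hScard : Nat.card S = p) (hM : Nat.card M = p ^ 6)
    (hgen : ¬∃ G : Finset M, G.card ≤ 2 ∧ Submodule.span R (G : Set M) = ⊤) :
    powTorsion I M 3 = ⊤ := by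
  have : Finite M := Nat.finite_of_card_ne_zero (hM ▸ pow_ne_zero _ hp.ne_zero)
  have hrange := pi_powTorsion_one_le_range_monomialSMul_two hI hS hSI fun z hz =>
    hScard ▸ pow_lt_card_ker_lsmul hp hM hS hSI.le hgen hz
  refine submodule_eq_of_le_of_card_le le_top ?_
  rw [card_powTorsion_eq hI 2 hrange, ← hSI, hScard, Nat.card_congr Submodule.topEquiv.toEquiv, hM]
  rfl

end Cocyclic

section Character

variable {R M : Type*} [CommRing R] [AddCommGroup M] [Module R M]
  {S : Submodule R M} {I : Ideal R} {x y : R} {p n : ℕ}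

/-- The `R`-linear map from `M` to the injective cogenerator `CharacterModule R` that sends `q` to
the character `r ↦ φ (r • q)`. -/
def characterHom (R : Type*) {M : Type*} [CommRing R] [AddCommGroup M] [Module R M]
    (φ : CharacterModule M) : M →ₗ[R] CharacterModule R where
  toFun q := CharacterModule.dual (LinearMap.toSpanSingleton R M q) φ
  map_add' q q' := CharacterModule.ext _ fun r =>
    (congrArg φ (smul_add r q q')).trans (map_add φ _ _)
  map_smul' t q := CharacterModule.ext _ fun r =>
    congrArg φ ((smul_comm r t q).trans (smul_assoc t r q).symm)

theorem characterHom_apply (φ : CharacterModule M) (q : M) (r : R) :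
    characterHom R φ q r = φ (r • q) := rfl

theorem exists_injective_characterHom (hS : IsLeast {T : Submodule R M | T ≠ ⊥} S) :
    ∃ φ : CharacterModule M, Function.Injective (characterHom R φ) := by
  obtain ⟨s, hs, hs0⟩ := S.exists_mem_ne_zero_of_ne_bot hS.1
  obtain ⟨φ, hφ⟩ := CharacterModule.exists_character_apply_ne_zero_of_ne_zero hs0
  refine ⟨φ, LinearMap.ker_eq_bot.1 (by_contra fun hker => hφ ?_)⟩
  have hs_ker : characterHom R φ s = 0 := hS.2 hker hs
  rw [← one_smul R s, ← characterHom_apply, hs_ker]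
  rfl

theorem apply_eq_zero_of_mem_powTorsion_one {d : CharacterModule R}
    (hd : d ∈ powTorsion I (CharacterModule R) 1) {r : R} (hr : r ∈ I) : d r = 0 := by
  rw [mem_powTorsion, pow_one] at hd
  rw [← mul_one r, ← smul_eq_mul, ← CharacterModule.smul_apply, hd r hr]
  rfl

theorem exists_intCast_sub_mem (hp : p.Prime) (hI : Nat.card (R ⧸ I) = p) (r : R) :
    ∃ m : ℤ, r - m ∈ I := by
  have := Fact.mk hp
  have : Finite (R ⧸ I) := Nat.finite_of_card_ne_zero (hI ▸ hp.ne_zero)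
  have : Nontrivial (R ⧸ I) := Finite.one_lt_card_iff_nontrivial.1 (hI ▸ hp.one_lt)
  obtain ⟨m, hm⟩ := AddSubgroup.mem_zmultiples_iff.1
    (mem_zmultiples_of_prime_card hI (g := 1) (g' := Ideal.Quotient.mk I r) one_ne_zero)
  refine ⟨m, (Ideal.Quotient.mk_eq_mk_iff_sub_mem _ _).1 ?_⟩
  simpa using hm.symm

theorem finite_and_card_powTorsion_one_characterModule_le (hp : p.Prime)
    (hI : Nat.card (R ⧸ I) = p) :
    Finite (powTorsion I (CharacterModule R) 1) ∧
      Nat.card (powTorsion I (CharacterModule R) 1) ≤ p := by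
  have hpI : (p : R) ∈ I := by
    rw [← Ideal.Quotient.eq_zero_iff_mem, map_natCast, ← hI, ← nsmul_one]
    exact card_nsmul_eq_zero'
  let torsion : Set (AddCircle (1 : ℚ)) := {a | p • a = 0}
  have htorsion : torsion.Finite := AddCircle.finite_torsion 1 hp.pos
  have : Finite torsion := htorsion
  let evalOne (d : powTorsion I (CharacterModule R) 1) : torsion :=
    ⟨d.1 1, by
      rw [Set.mem_ofPred_eq, ← map_nsmul, nsmul_one]
      exact apply_eq_zero_of_mem_powTorsion_one d.2 hpI⟩
  have hinj : Function.Injective evalOne := by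
    intro d e hde
    refine Subtype.ext (CharacterModule.ext _ fun r => ?_)
    obtain ⟨m, hm⟩ := exists_intCast_sub_mem hp hI r
    have eval_eq (f : powTorsion I (CharacterModule R) 1) : f.1 r = m • f.1 1 := by
      rw [← map_zsmul, zsmul_one, ← sub_eq_zero, ← map_sub]
      exact apply_eq_zero_of_mem_powTorsion_one f.2 hm
    rw [eval_eq d, eval_eq e, Subtype.mk.inj hde]
  refine ⟨Finite.of_injective _ hinj, (Nat.card_le_card_of_injective _ hinj).trans ?_⟩
  have hle := AddCircle.card_torsion_le_of_isSMulRegular (1 : ℚ) p hp.ne_zero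
    (IsSMulRegular.of_ne_zero hp.ne_zero)
  rwa [← htorsion.cast_ncard_eq, Nat.cast_le] at hle

theorem nonempty_linearEquiv_powTorsion_characterModule (hp : p.Prime)
    (hI : I = Ideal.span {x, y}) (hIcard : Nat.card (R ⧸ I) = p) {φ : CharacterModule M}
    (hφ : Function.Injective (characterHom R φ)) (hM : powTorsion I M n = ⊤)
    (hMcard : Nat.card M = p ^ (n + 1).choose 2) :
    Nonempty (M ≃ₗ[R] powTorsion I (CharacterModule R) n) := by
  obtain ⟨_, hle⟩ := finite_and_card_powTorsion_one_characterModule_le hp hIcard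
  have := finite_powTorsion (M := CharacterModule R) hI n
  have hrange : LinearMap.range (characterHom R φ) ≤ powTorsion I (CharacterModule R) n := by
    rintro _ ⟨q, rfl⟩
    refine mem_powTorsion.2 fun r hr => ?_
    rw [← map_smul, powTorsion_eq_top_iff.1 hM r hr, map_zero]
  have hcard : Nat.card (powTorsion I (CharacterModule R) n) ≤
      Nat.card (LinearMap.range (characterHom R φ)) := by
    calc _ ≤ p ^ (n + 1).choose 2 := (card_powTorsion_le hI n).trans (Nat.pow_le_pow_left hle _)
      _ = Nat.card M := hMcard.symm
      _ = _ := Nat.card_congr (LinearEquiv.ofInjective _ hφ).toEquiv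
  exact ⟨(LinearEquiv.ofInjective _ hφ).trans
    (LinearEquiv.ofEq _ _ (submodule_eq_of_le_of_card_le hrange hcard))⟩

end Character

section Model

/-- The group `ℤ/p³ × ℤ/p² × ℤ/p` underlying `P'₃,₁`. -/
abbrev P₃₁ (p : ℕ) : Type := ZMod (p ^ 3) × ZMod (p ^ 2) × ZMod p

theorem natCast_mul_val_natCast {p n N : ℕ} (hN : N = p * n) (b : ℕ) :
    (p : ZMod N) * (((b : ZMod n).val : ℕ) : ZMod N) = ((p * b : ℕ) : ZMod N) := by
  rw [ZMod.val_natCast, ← Nat.cast_mul, ZMod.natCast_eq_natCast_iff', hN,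
    Nat.mul_mod_mul_left, Nat.mul_mod_mul_left, Nat.mod_mod]

theorem exists_injective_zmod_character (n : ℕ) [NeZero n] :
    ∃ ψ : ZMod n →+ AddCircle (1 : ℚ), Function.Injective ψ := by
  let g : AddCircle (1 : ℚ) := ((1 / n : ℚ) : AddCircle (1 : ℚ))
  have hg : addOrderOf g = n := AddCircle.addOrderOf_period_div (NeZero.pos n)
  have hn : zmultiplesHom _ g n = 0 := by
    simpa [hg] using addOrderOf_nsmul_eq_zero g
  refine ⟨ZMod.lift n ⟨zmultiplesHom _ g, hn⟩, (ZMod.lift_injective n).2 fun m hm => ?_⟩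
  rw [ZMod.intCast_zmod_eq_zero_iff_dvd, ← hg]
  exact addOrderOf_dvd_iff_zsmul_eq_zero.2 hm

variable {R : Type*} [CommRing R] {p : ℕ} [Module R (P₃₁ p)] {y : R}

/-- The element `y` acts on `ℤ/p³ × ℤ/p² × ℤ/p` as `(a₀, a₁, a₂) ↦ (p a₁, p a₂, 0)`, which is how
`1 + x` acts on `P'₃,₁`. -/
def ShiftsP₃₁ (p : ℕ) [Module R (P₃₁ p)] (y : R) : Prop :=
  ∀ a : P₃₁ p, y • a = ((p : ZMod (p ^ 3)) * ((a.2.1.val : ℕ) : ZMod (p ^ 3)),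
    (p : ZMod (p ^ 2)) * ((a.2.2.val : ℕ) : ZMod (p ^ 2)), 0)

theorem exists_natCast_eq [NeZero p] (v : P₃₁ p) : ∃ a b c : ℕ, v = (↑a, ↑b, ↑c) := by
  obtain ⟨a, b, c⟩ := v
  exact ⟨a.val, b.val, c.val, by simp⟩

theorem smul_natCast_eq (hy : ShiftsP₃₁ p y) (a b c : ℕ) :
    y • ((a, b, c) : P₃₁ p) = (((p * b : ℕ), (p * c : ℕ), (0 : ℕ)) : P₃₁ p) := by
  rw [hy _, natCast_mul_val_natCast (pow_succ' p 2), natCast_mul_val_natCast (pow_two p),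
    Nat.cast_zero]

theorem natCast_smul_natCast_eq (a b c : ℕ) :
    (p : R) • ((a, b, c) : P₃₁ p) = (((p * a : ℕ), (p * b : ℕ), (p * c : ℕ)) : P₃₁ p) := by
  simp [Nat.cast_smul_eq_nsmul]

theorem powTorsion_P₃₁_eq_top [NeZero p] (hy : ShiftsP₃₁ p y) :
    powTorsion (Ideal.span {(p : R), y}) (P₃₁ p) 3 = ⊤ := by
  refine Submodule.eq_top_iff'.2 fun v => ?_
  obtain ⟨a, b, c, rfl⟩ := exists_natCast_eq v
  simp only [mem_powTorsion_succ rfl, powTorsion_zero, smul_natCast_eq hy, natCast_smul_natCast_eq,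
    Submodule.mem_bot, Prod.mk_eq_zero, ZMod.natCast_eq_zero_iff]
  simp [pow_succ, mul_assoc, mul_dvd_mul_iff_left (NeZero.ne p)]

theorem exists_injective_characterHom_P₃₁ [NeZero p] (hy : ShiftsP₃₁ p y) :
    ∃ φ : CharacterModule (P₃₁ p), Function.Injective (characterHom R φ) := by
  obtain ⟨ψ, hψ⟩ := exists_injective_zmod_character (p ^ 3)
  refine ⟨ψ.comp (AddMonoidHom.fst _ _), (injective_iff_map_eq_zero _).2 fun v hv => ?_⟩
  obtain ⟨a, b, c, rfl⟩ := exists_natCast_eq v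
  have fst_smul_eq_zero (r : R) : (r • ((a, b, c) : P₃₁ p)).1 = 0 :=
    (map_eq_zero_iff ψ hψ).1 (DFunLike.congr_fun hv r)
  have ha : (a : ZMod (p ^ 3)) = 0 := by simpa using fst_smul_eq_zero 1
  have hb := fst_smul_eq_zero y
  have hc := fst_smul_eq_zero (y * y)
  rw [mul_smul, smul_natCast_eq hy, smul_natCast_eq hy, ZMod.natCast_eq_zero_iff, ← mul_assoc,
    ← pow_two, pow_succ] at hc
  rw [smul_natCast_eq hy, ZMod.natCast_eq_zero_iff, pow_succ'] at hb
  simp only [Prod.mk_eq_zero, ha, ZMod.natCast_eq_zero_iff, true_and]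
  exact ⟨Nat.dvd_of_mul_dvd_mul_left (NeZero.pos p) hb,
    Nat.dvd_of_mul_dvd_mul_left (pow_pos (NeZero.pos p) 2) hc⟩

theorem exists_finset_span_P₃₁_eq_top (R : Type*) [CommRing R] [NeZero p] [Module R (P₃₁ p)] :
    ∃ G : Finset (P₃₁ p), G.card ≤ 3 ∧ Submodule.span R (G : Set (P₃₁ p)) = ⊤ := by
  refine ⟨{(1, 0, 0), (0, 1, 0), (0, 0, 1)}, Finset.card_le_three, ?_⟩
  refine Submodule.eq_top_iff'.2 fun v => ?_
  obtain ⟨a, b, c, rfl⟩ := exists_natCast_eq v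
  have hv : ((a, b, c) : P₃₁ p) = a • (1, 0, 0) + b • (0, 1, 0) + c • (0, 0, 1) := by simp
  rw [hv]
  refine add_mem (add_mem ?_ ?_) ?_ <;>
    exact nsmul_mem (Submodule.subset_span (by simp)) _

end Model

section General

theorem isMaximal_of_card_quotient {R : Type*} [CommRing R] {I : Ideal R} {p : ℕ} (hp : p.Prime)
    (hI : Nat.card (R ⧸ I) = p) : I.IsMaximal := by
  have := Fact.mk hp
  have : Finite (R ⧸ I) := Nat.finite_of_card_ne_zero (hI ▸ hp.ne_zero)
  have := Fintype.ofFinite (R ⧸ I)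
  let e : ZMod p ≃+* R ⧸ I :=
    ZMod.ringEquivOfPrime _ hp (Nat.card_eq_fintype_card.symm.trans hI)
  exact Ideal.Quotient.maximal_of_isField I
    (e.symm.toMulEquiv.isField (Field.toIsField (ZMod p)))

theorem le_powTorsion_one_of_linearEquiv {R M : Type*} [CommRing R] [AddCommGroup M] [Module R M]
    {I : Ideal R} {S : Submodule R M} (e : S ≃ₗ[R] R ⧸ I) : S ≤ powTorsion I M 1 := by
  intro s hs
  rw [mem_powTorsion, pow_one]
  intro r hr
  have hrs : r • (⟨s, hs⟩ : S) = 0 := e.injective <| by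
    rw [map_smul, map_zero, Algebra.smul_def, Ideal.Quotient.algebraMap_eq,
      Ideal.Quotient.eq_zero_iff_mem.2 hr, zero_mul]
  exact congrArg Subtype.val hrs

theorem exists_finset_span_eq_top_of_linearEquiv {R M N : Type*} [CommRing R] [AddCommGroup M]
    [Module R M] [AddCommGroup N] [Module R N] (e : M ≃ₗ[R] N) {n : ℕ}
    (hM : ∃ G : Finset M, G.card ≤ n ∧ Submodule.span R (G : Set M) = ⊤) :
    ∃ G : Finset N, G.card ≤ n ∧ Submodule.span R (G : Set N) = ⊤ := by
  obtain ⟨G, hG, htop⟩ := hM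
  refine ⟨G.map e.toEquiv.toEmbedding, by rwa [Finset.card_map], ?_⟩
  have hspan := Submodule.map_span (e : M →ₗ[R] N) (G : Set M)
  rw [htop, Submodule.map_top, LinearEquiv.range] at hspan
  simpa using hspan.symm

theorem nonempty_linearEquiv_P₃₁ {R : Type*} [CommRing R] {p : ℕ} (hp : p.Prime) {y : R}
    {I : Ideal R} (hI : I = Ideal.span {(p : R), y}) (hIcard : Nat.card (R ⧸ I) = p)
    {Q : Type*} [AddCommGroup Q] [Module R Q] {S : Submodule R Q}
    (hS : IsLeast {T : Submodule R Q | T ≠ ⊥} S) (hQ : powTorsion I Q 3 = ⊤)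
    (hcard : Nat.card Q = p ^ 6) [Module R (P₃₁ p)] (hy : ShiftsP₃₁ p y) :
    Nonempty (Q ≃ₗ[R] P₃₁ p) := by
  have : NeZero p := ⟨hp.ne_zero⟩
  obtain ⟨φ, hφ⟩ := exists_injective_characterHom hS
  obtain ⟨ψ, hψ⟩ := exists_injective_characterHom_P₃₁ hy
  have hcard' : Nat.card (P₃₁ p) = p ^ 6 := by
    simp only [Nat.card_prod, Nat.card_zmod]
    ring
  obtain ⟨e⟩ := nonempty_linearEquiv_powTorsion_characterModule hp hI hIcard hφ hQ hcard
  obtain ⟨e'⟩ := nonempty_linearEquiv_powTorsion_characterModule (n := 3) hp hI hIcard hψ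
    (hI ▸ powTorsion_P₃₁_eq_top hy) hcard'
  exact ⟨e.trans e'.symm⟩

theorem cocyclic_R₂_module_of_card_p6_general {R : Type*} [CommRing R] {p : ℕ} (hp : p.Prime)
    (y : R) (hR : Nat.card (R ⧸ Ideal.span {(p : R), y}) = p)
    (Q : Type*) [AddCommGroup Q] [Module R Q] (S : Submodule R Q)
    (hS_min : ∀ T : Submodule R Q, T ≠ ⊥ → S ≤ T)
    (hS_iso : Nonempty (S ≃ₗ[R] R ⧸ Ideal.span {(p : R), y}))
    (hcard : Nat.card Q = p ^ 6) [Module R (P₃₁ p)] (hy : ShiftsP₃₁ p y) :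
    (∃ G : Finset Q, G.card ≤ 3 ∧ Submodule.span R (G : Set Q) = ⊤) ∧
    ((¬∃ G : Finset Q, G.card ≤ 2 ∧ Submodule.span R (G : Set Q) = ⊤) →
      Nonempty (Q ≃ₗ[R] P₃₁ p)) := by
  have : NeZero p := ⟨hp.ne_zero⟩
  have := isMaximal_of_card_quotient hp hR
  obtain ⟨e⟩ := hS_iso
  have hScard : Nat.card S = p := (Nat.card_congr e.toEquiv).trans hR
  have hS : IsLeast {T : Submodule R Q | T ≠ ⊥} S :=
    ⟨fun hbot => hp.ne_one (by simpa [hbot] using hScard.symm), hS_min⟩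
  have hSI := eq_powTorsion_one_of_isLeast hS (le_powTorsion_one_of_linearEquiv e)
  by_cases hgen : ∃ G : Finset Q, G.card ≤ 2 ∧ Submodule.span R (G : Set Q) = ⊤
  · obtain ⟨G, hG, htop⟩ := hgen
    exact ⟨⟨G, hG.trans (by simp), htop⟩, fun hnot => absurd ⟨G, hG, htop⟩ hnot⟩
  · obtain ⟨f⟩ := nonempty_linearEquiv_P₃₁ hp rfl hR hS
      (powTorsion_three_eq_top hp rfl hS hSI hScard hcard hgen) hcard hy
    exact ⟨exists_finset_span_eq_top_of_linearEquiv f.symm (exists_finset_span_P₃₁_eq_top R),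
      fun _ => ⟨f⟩⟩

end General

section R₂

variable {p : ℕ}

theorem exists_ringHom_zmod_xR (hp : p.Prime) (hodd : p ≠ 2) :
    ∃ g : R₂ →+* ZMod p, g xR = -1 := by
  have := Fact.mk hp
  let ev : ℤ[X] →+* ZMod p := eval₂RingHom (Int.castRingHom (ZMod p)) (-1)
  have hX : ev X = -1 := eval₂_X _ _
  have htwo : (2 : ZMod p) ≠ 0 := Ring.two_ne_zero (by rwa [ZMod.ringChar_zmod_n])
  have hunit : Submonoid.closure {X, 1 - X} ≤ (IsUnit.submonoid (ZMod p)).comap ev := by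
    rw [Submonoid.closure_le]
    rintro _ (rfl | rfl)
    · exact (hX ▸ isUnit_one.neg : IsUnit (ev X))
    · have hsub : ev (1 - X) = 2 := by rw [map_sub, map_one, hX]; norm_num
      exact (hsub ▸ htwo.isUnit : IsUnit (ev (1 - X)))
  exact ⟨IsLocalization.lift fun f => hunit f.2, (IsLocalization.lift_eq _ X).trans hX⟩

theorem charP_quotient_of_natCast_mem {R : Type*} [CommRing R] {I : Ideal R} [Nontrivial (R ⧸ I)]
    (hp : p.Prime) (hpI : (p : R) ∈ I) : CharP (R ⧸ I) p :=
  (CharP.charP_iff_prime_eq_zero hp).2 <| by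
    rw [← map_natCast (Ideal.Quotient.mk I), Ideal.Quotient.eq_zero_iff_mem.2 hpI]

theorem card_quotient_span_natCast_one_add_xR (hp : p.Prime) (hodd : p ≠ 2) :
    Nat.card (R₂ ⧸ Ideal.span {(p : R₂), 1 + xR}) = p := by
  set I := Ideal.span {(p : R₂), 1 + xR}
  have := Fact.mk hp
  have hxI : Ideal.Quotient.mk I xR = -1 := by
    have hadd : Ideal.Quotient.mk I (1 + xR) = 0 :=
      Ideal.Quotient.eq_zero_iff_mem.2 (Ideal.subset_span (by simp))
    rw [map_add, map_one] at hadd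
    exact eq_neg_of_add_eq_zero_right hadd
  obtain ⟨g, hg⟩ := exists_ringHom_zmod_xR hp hodd
  have hgI : I ≤ RingHom.ker g := by
    rw [Ideal.span_le]
    rintro _ (rfl | rfl) <;> simp [hg]
  let toZMod : R₂ ⧸ I →+* ZMod p := Ideal.Quotient.lift I g hgI
  have := toZMod.domain_nontrivial
  have : CharP (R₂ ⧸ I) p :=
    charP_quotient_of_natCast_mem hp (Ideal.subset_span (by simp))
  let ofZMod : ZMod p →+* R₂ ⧸ I := ZMod.castHom dvd_rfl _
  have ofZMod_comp_toZMod : ofZMod.comp toZMod = RingHom.id _ := by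
    refine Ideal.Quotient.ringHom_ext (IsLocalization.ringHom_ext
      (Submonoid.closure {X, 1 - X} : Submonoid ℤ[X])
      (Polynomial.ringHom_ext (fun n => by simp) ?_))
    change ofZMod (g xR) = Ideal.Quotient.mk I xR
    rw [hg, map_neg, map_one, hxI]
  have e := RingEquiv.ofRingHom toZMod ofZMod (RingHom.ext_zmod _ _) ofZMod_comp_toZMod
  rw [Nat.card_congr e.toEquiv, Nat.card_zmod]

theorem shiftsP₃₁_one_add_xR [Module R₂ (P₃₁ p)]
    (hX : ∀ a : P₃₁ p, xR • a = ((p : ZMod (p ^ 3)) * ((a.2.1.val : ℕ) : ZMod (p ^ 3)) - a.1,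
      (p : ZMod (p ^ 2)) * ((a.2.2.val : ℕ) : ZMod (p ^ 2)) - a.2.1, -a.2.2)) :
    ShiftsP₃₁ p (1 + xR) := fun a => by
  rw [add_smul, one_smul, hX]
  simp [Prod.ext_iff]

end R₂

/-- Let `p` be an odd prime, `P'₁,₁ = R₂/(p, 1+x)`, and `P'₃,₁` the `R₂`-module with
underlying group `ℤ/p³ℤ × ℤ/p²ℤ × ℤ/pℤ` on which `x` acts by
`x•(a₀,a₁,a₂) = (p•a₁ − a₀, p•a₂ − a₁, −a₂)`.  If `Q` is a cocyclic `R₂`-module (it has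
a simple submodule `S` contained in every nonzero submodule) with socle isomorphic to
`P'₁,₁` and `|Q| = p⁶`, then `Q` is generated by at most three elements, and if `Q`
cannot be generated by two elements, then `Q ≅ P'₃,₁`. -/
theorem cocyclic_R₂_module_of_card_p6 (p : ℕ) (hp : p.Prime) (hodd : p ≠ 2)
    (Q : Type*) [AddCommGroup Q] [Module R₂ Q]
    (S : Submodule R₂ Q)
    (hS_simple : IsSimpleModule R₂ S)
    (hS_min : ∀ T : Submodule R₂ Q, T ≠ ⊥ → S ≤ T)
    (hS_iso : Nonempty (S ≃ₗ[R₂] (R₂ ⧸ Ideal.span {(p : R₂), 1 + xR})))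
    (hcard : Nat.card Q = p ^ 6)
    [Module R₂ (ZMod (p ^ 3) × ZMod (p ^ 2) × ZMod p)]
    [IsScalarTower ℤ R₂ (ZMod (p ^ 3) × ZMod (p ^ 2) × ZMod p)]
    (hX : ∀ a : ZMod (p ^ 3) × ZMod (p ^ 2) × ZMod p,
      xR • a =
        ((p : ZMod (p ^ 3)) * ((a.2.1.val : ℕ) : ZMod (p ^ 3)) - a.1,
         (p : ZMod (p ^ 2)) * ((a.2.2.val : ℕ) : ZMod (p ^ 2)) - a.2.1,
         -a.2.2)) :
    (∃ G : Finset Q, G.card ≤ 3 ∧ Submodule.span R₂ (G : Set Q) = ⊤) ∧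
    ((¬ ∃ G : Finset Q, G.card ≤ 2 ∧ Submodule.span R₂ (G : Set Q) = ⊤) →
      Nonempty (Q ≃ₗ[R₂] (ZMod (p ^ 3) × ZMod (p ^ 2) × ZMod p))) :=
  cocyclic_R₂_module_of_card_p6_general hp (1 + xR)
    (card_quotient_span_natCast_one_add_xR hp hodd) Q S hS_min hS_iso hcard
    (shiftsP₃₁_one_add_xR hX)
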